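/- Let H be a complex Hilbert space and let C ⊆ H ⊕ H be a monotone relation. Then the following are equivalent: (i) C is maximal monotone; (ii) there exists λ > 0 such that (1 + λC)[H] = H; (iii) for every λ > 0 one has (1 + λC)[H] = H. -/

import Mathlib

open scoped ComplexInnerProductSpace

/-- A relation `C ⊆ H ⊕ H` is monotone if `Re⟪x−u, y−v⟫ ≥ 0` for all `(x,y), (u,v) ∈ C`. -/
def IsMonotoneRel {Hs : Type*} [NormedAddCommGroup Hs] [InnerProductSpace ℂ Hs]
    (C : Set (Hs × Hs)) : Prop :=
  ∀ p ∈ C, ∀ q ∈ C, 0 ≤ (⟪p.1 - q.1, p.2 - q.2⟫ : ℂ).re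

/-- A relation is maximal monotone if it is monotone and admits no proper monotone extension. -/
def IsMaximalMonotoneRel {Hs : Type*} [NormedAddCommGroup Hs] [InnerProductSpace ℂ Hs]
    (C : Set (Hs × Hs)) : Prop :=
  IsMonotoneRel C ∧ ∀ B : Set (Hs × Hs), IsMonotoneRel B → C ⊆ B → B = C

/-- The relation `1 + λC = {(u, u + λv) : (u,v) ∈ C}`. -/
def onePlusSmul {Hs : Type*} [NormedAddCommGroup Hs] [InnerProductSpace ℂ Hs]
    (l : ℝ) (C : Set (Hs × Hs)) : Set (Hs × Hs) :=
  {q | ∃ p ∈ C, q = (p.1, p.1 + l • p.2)}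

/-- The post-set `B[N] = {y : ∃ x ∈ N, (x,y) ∈ B}`. -/
def postSet {Hs : Type*} [NormedAddCommGroup Hs] [InnerProductSpace ℂ Hs]
    (B : Set (Hs × Hs)) (N : Set Hs) : Set Hs :=
  {y | ∃ x ∈ N, (x, y) ∈ B}

/-!
The Cayley transform `(u, v) ↦ (u + λv, u - λv)` turns monotone relations into graphs of
nonexpansive maps, because `‖x - y‖ ≤ ‖x + y‖` exactly when `0 ≤ Re⟪x, y⟫`. Surjectivity of
`1 + λC` means that this nonexpansive map is defined everywhere, and a maximal monotone relation
has this property because a nonexpansive map between Hilbert spaces extends to any further point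
(Kirszbraun, Valentine).

To find the value `y` of the extension at a point, taken to be the origin, one needs
`‖bᵢ‖² - ‖aᵢ‖² ≤ 2⟪y, bᵢ⟫ - ‖y‖²` for every pair `(aᵢ, bᵢ)` of the graph: the points
`(bᵢ, ‖bᵢ‖² - ‖aᵢ‖²)` must lie below one tangent hyperplane of the paraboloid `ρ = ‖c‖²`. Such a
hyperplane exists by Hahn–Banach as soon as the convex hull of these points lies below the
paraboloid, and this holds because a nonexpansive map does not increase variances.
-/

open scoped InnerProductSpace

theorem exists_affine_between_of_convexOn {V : Type*} [TopologicalSpace V] [AddCommGroup V]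
    [Module ℝ V] [IsTopologicalAddGroup V] [ContinuousSMul ℝ V] {φ : V → ℝ}
    (hφ : ConvexOn ℝ Set.univ φ) (hφc : Continuous φ) {S : Set (V × ℝ)} (hS : Convex ℝ S)
    (hne : S.Nonempty) (hle : ∀ p ∈ S, p.2 ≤ φ p.1) :
    ∃ (g : StrongDual ℝ V) (k : ℝ), (∀ c, g c - k ≤ φ c) ∧ ∀ p ∈ S, p.2 ≤ g p.1 - k := by
  have hconv : Convex ℝ {p : V × ℝ | φ p.1 < p.2} := by
    simpa only [Set.mem_univ, true_and] using hφ.convex_strict_epigraph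
  have hopen : IsOpen {p : V × ℝ | φ p.1 < p.2} :=
    isOpen_lt (hφc.comp continuous_fst) continuous_snd
  have hdisj : Disjoint {p : V × ℝ | φ p.1 < p.2} S :=
    Set.disjoint_left.2 fun p hp hpS => hp.not_ge (hle p hpS)
  obtain ⟨f, u, hf_lt, hf_ge⟩ := geometric_hahn_banach_open hconv hopen hS hdisj
  let γ : ℝ := -f (0, 1)
  have hf (c : V) (ρ : ℝ) : f (c, ρ) = f (c, 0) - γ * ρ := by
    rw [neg_mul, sub_neg_eq_add, mul_comm, ← smul_eq_mul, ← map_smul, ← map_add]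
    simp
  -- The separating hyperplane is not vertical, as `S` and the epigraph share a vertical line.
  have hγ : 0 < γ := by
    obtain ⟨p, hp⟩ := hne
    have hbelow := hf_ge p hp
    have habove := hf_lt (p.1, φ p.1 + 1) (lt_add_one (φ p.1))
    rw [← Prod.mk.eta (p := p), hf] at hbelow
    rw [hf] at habove
    have hpos : 0 < γ * (φ p.1 + 1 - p.2) := by linarith
    exact pos_of_mul_pos_left hpos (by linarith [hle p hp])
  let g : StrongDual ℝ V := γ⁻¹ • f.comp (ContinuousLinearMap.inl ℝ V ℝ)
  have hg (c : V) (ρ : ℝ) : γ * (g c - ρ) = f (c, ρ) := by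
    rw [hf, mul_sub]
    simp [g, hγ.ne']
  refine ⟨g, u / γ, fun c => le_of_forall_gt fun ρ hρ => ?_, fun p hp => ?_⟩
  · have habove := hf_lt (c, ρ) hρ
    rw [← hg, ← lt_div_iff₀' hγ] at habove
    linarith
  · have hbelow := hf_ge p hp
    rw [← Prod.mk.eta (p := p), ← hg, ← div_le_iff₀' hγ] at hbelow
    linarith

theorem exists_forall_snd_le_inner_sub_norm_sq {E : Type*} [NormedAddCommGroup E]
    [InnerProductSpace ℝ E] [CompleteSpace E] {S : Set (E × ℝ)}
    (hS : Convex ℝ S) (hle : ∀ p ∈ S, p.2 ≤ ‖p.1‖ ^ 2) :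
    ∃ y : E, ∀ p ∈ S, p.2 ≤ 2 * ⟪y, p.1⟫_ℝ - ‖y‖ ^ 2 := by
  obtain rfl | hne := S.eq_empty_or_nonempty
  · exact ⟨0, by simp⟩
  obtain ⟨g, k, hg_le, hg_ge⟩ := exists_affine_between_of_convexOn
    (convexOn_univ_norm.pow (fun x _ => norm_nonneg x) 2) (by fun_prop) hS hne hle
  obtain ⟨y, hy⟩ : ∃ y : E, ∀ c, g c = 2 * ⟪y, c⟫_ℝ :=
    ⟨(InnerProductSpace.toDual ℝ E).symm ((2⁻¹ : ℝ) • g), fun c => by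
      simp [real_inner_smul_left]⟩
  have hk : ‖y‖ ^ 2 ≤ k := by
    have htouch := hg_le y
    rw [hy, real_inner_self_eq_norm_sq, Pi.pow_apply] at htouch
    linarith
  refine ⟨y, fun p hp => ?_⟩
  rw [← hy]
  linarith [hg_ge p hp]

section Variance

variable {E F ι : Type*} [SeminormedAddCommGroup E] [InnerProductSpace ℝ E]
  [SeminormedAddCommGroup F] [InnerProductSpace ℝ F] {a : ι → F} {b : ι → E}

theorem sum_mul_norm_sq_sub_norm_sum_smul_sq (s : Finset ι) {w : ι → ℝ} (hw : ∑ i ∈ s, w i = 1)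
    (v : ι → F) :
    ∑ i ∈ s, w i * ‖v i‖ ^ 2 - ‖∑ i ∈ s, w i • v i‖ ^ 2 =
      (∑ i ∈ s, ∑ j ∈ s, w i * w j * ‖v i - v j‖ ^ 2) / 2 := by
  have hcross : ∑ i ∈ s, ∑ j ∈ s, w i * w j * ⟪v i, v j⟫_ℝ = ‖∑ i ∈ s, w i • v i‖ ^ 2 := by
    rw [← real_inner_self_eq_norm_sq, sum_inner]
    simp only [inner_sum, real_inner_smul_left, real_inner_smul_right, mul_assoc, mul_left_comm]
  have hexpand (i j : ι) : w i * w j * ‖v i - v j‖ ^ 2 =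
      w i * ‖v i‖ ^ 2 * w j + w i * (w j * ‖v j‖ ^ 2) - 2 * (w i * w j * ⟪v i, v j⟫_ℝ) := by
    rw [norm_sub_sq_real]
    ring
  simp only [hexpand, Finset.sum_sub_distrib, Finset.sum_add_distrib, ← Finset.mul_sum,
    ← Finset.sum_mul, hw, hcross]
  ring

theorem sum_mul_norm_sq_sub_norm_sum_smul_sq_le (s : Finset ι) {w : ι → ℝ}
    (hw₀ : ∀ i ∈ s, 0 ≤ w i) (hw₁ : ∑ i ∈ s, w i = 1)
    (hab : ∀ i ∈ s, ∀ j ∈ s, ‖b i - b j‖ ≤ ‖a i - a j‖) :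
    ∑ i ∈ s, w i * ‖b i‖ ^ 2 - ‖∑ i ∈ s, w i • b i‖ ^ 2 ≤
      ∑ i ∈ s, w i * ‖a i‖ ^ 2 - ‖∑ i ∈ s, w i • a i‖ ^ 2 := by
  rw [sum_mul_norm_sq_sub_norm_sum_smul_sq s hw₁, sum_mul_norm_sq_sub_norm_sum_smul_sq s hw₁]
  gcongr with i hi j hj
  · exact mul_nonneg (hw₀ i hi) (hw₀ j hj)
  · exact hab i hi j hj

theorem snd_le_norm_fst_sq_of_mem_convexHull (hab : ∀ i j, ‖b i - b j‖ ≤ ‖a i - a j‖) {p : E × ℝ}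
    (hp : p ∈ convexHull ℝ (Set.range fun i => (b i, ‖b i‖ ^ 2 - ‖a i‖ ^ 2))) :
    p.2 ≤ ‖p.1‖ ^ 2 := by
  obtain ⟨κ, _, w, z, hw₀, hw₁, hz, rfl⟩ := mem_convexHull_iff_exists_fintype.1 hp
  choose k hk using hz
  have hvar := sum_mul_norm_sq_sub_norm_sum_smul_sq_le Finset.univ (fun i _ => hw₀ i) hw₁
    (fun i _ j _ => hab (k i) (k j))
  simp only [← hk, Prod.fst_sum, Prod.snd_sum, Prod.smul_fst, Prod.smul_snd, smul_eq_mul, mul_sub,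
    Finset.sum_sub_distrib]
  linarith [sq_nonneg ‖∑ i, w i • a (k i)‖]

end Variance

theorem exists_forall_norm_sub_le_norm_sub {E F ι : Type*} [NormedAddCommGroup E]
    [InnerProductSpace ℝ E] [CompleteSpace E] [SeminormedAddCommGroup F] [InnerProductSpace ℝ F]
    {a : ι → F} {b : ι → E} (hab : ∀ i j, ‖b i - b j‖ ≤ ‖a i - a j‖) (x : F) :
    ∃ y : E, ∀ i, ‖y - b i‖ ≤ ‖x - a i‖ := by
  have htranslate (i j : ι) : ‖b i - b j‖ ≤ ‖(x - a i) - (x - a j)‖ := by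
    rw [sub_sub_sub_cancel_left, norm_sub_rev (a j)]
    exact hab i j
  obtain ⟨y, hy⟩ := exists_forall_snd_le_inner_sub_norm_sq (convex_convexHull ℝ _)
    fun p hp => snd_le_norm_fst_sq_of_mem_convexHull htranslate hp
  refine ⟨y, fun i => le_of_sq_le_sq ?_ (norm_nonneg _)⟩
  have htangent := hy _ (subset_convexHull ℝ _ ⟨i, rfl⟩)
  rw [norm_sub_sq_real]
  linarith

theorem norm_sub_le_norm_add_iff_re_inner_nonneg {𝕜 E : Type*} [RCLike 𝕜] [SeminormedAddCommGroup E]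
    [InnerProductSpace 𝕜 E] {x y : E} : ‖x - y‖ ≤ ‖x + y‖ ↔ 0 ≤ RCLike.re (inner 𝕜 x y) := by
  rw [re_inner_eq_norm_add_mul_self_sub_norm_sub_mul_self_div_four,
    mul_self_le_mul_self_iff (norm_nonneg _) (norm_nonneg _)]
  constructor <;> intro h <;> linarith

section Minty

variable {H : Type*} [NormedAddCommGroup H] [InnerProductSpace ℂ H] {C : Set (H × H)} {l : ℝ}

theorem norm_cayley_sub_le_iff (hl : 0 < l) {x y u v : H} :
    ‖(x - l • y) - (u - l • v)‖ ≤ ‖(x + l • y) - (u + l • v)‖ ↔ 0 ≤ (⟪x - u, y - v⟫_ℂ).re := by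
  have hsub : (x - l • y) - (u - l • v) = (x - u) - l • (y - v) := by module
  have hadd : (x + l • y) - (u + l • v) = (x - u) + l • (y - v) := by module
  rw [hsub, hadd, norm_sub_le_norm_add_iff_re_inner_nonneg (𝕜 := ℂ), inner_smul_right_eq_smul,
    RCLike.smul_re, mul_nonneg_iff_of_pos_left hl]
  rfl

theorem postSet_onePlusSmul_univ_eq_image :
    postSet (onePlusSmul l C) Set.univ = (fun p : H × H => p.1 + l • p.2) '' C := by
  ext z
  simp [postSet, onePlusSmul, eq_comm]

theorem IsMonotoneRel.injOn_add_smul (hC : IsMonotoneRel C) (hl : 0 < l) :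
    Set.InjOn (fun p : H × H => p.1 + l • p.2) C := by
  rintro ⟨x, y⟩ hxy ⟨u, v⟩ huv (hadd : x + l • y = u + l • v)
  have hnorm := (norm_cayley_sub_le_iff hl).2 (hC _ hxy _ huv)
  rw [sub_eq_zero.2 hadd, norm_zero, norm_le_zero_iff, sub_eq_zero] at hnorm
  have hx : x = u := by linear_combination (norm := module) (2⁻¹ : ℝ) • hadd + (2⁻¹ : ℝ) • hnorm
  subst hx
  simpa [hl.ne'] using hadd

theorem IsMonotoneRel.insert (hC : IsMonotoneRel C) {x y : H}
    (hxy : ∀ p ∈ C, 0 ≤ (⟪x - p.1, y - p.2⟫_ℂ).re) : IsMonotoneRel (insert (x, y) C) := by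
  rintro p (rfl | hp) q (rfl | hq)
  · simp
  · exact hxy q hq
  · rw [← inner_neg_neg, neg_sub, neg_sub]
    exact hxy p hp
  · exact hC p hp q hq

theorem IsMaximalMonotoneRel.mem (hC : IsMaximalMonotoneRel C) {x y : H}
    (hxy : ∀ p ∈ C, 0 ≤ (⟪x - p.1, y - p.2⟫_ℂ).re) : (x, y) ∈ C :=
  hC.2 _ (hC.1.insert hxy) (Set.subset_insert _ _) ▸ Set.mem_insert _ _

theorem IsMonotoneRel.exists_add_smul_eq [CompleteSpace H] (hC : IsMonotoneRel C) (hl : 0 < l)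
    (z : H) : ∃ x y : H, x + l • y = z ∧ ∀ p ∈ C, 0 ≤ (⟪x - p.1, y - p.2⟫_ℂ).re := by
  let _ : InnerProductSpace ℝ H := InnerProductSpace.complexToReal
  obtain ⟨w, hw⟩ := exists_forall_norm_sub_le_norm_sub
    (a := fun p : C => p.1.1 + l • p.1.2) (b := fun p : C => p.1.1 - l • p.1.2)
    (fun p q => (norm_cayley_sub_le_iff hl).2 (hC p p.2 q q.2)) z
  -- `(x, y)` is the preimage of `(z, w)` under the Cayley transform.
  let x : H := (2⁻¹ : ℝ) • (z + w)
  let y : H := (2 * l)⁻¹ • (z - w)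
  have hz : x + l • y = z := by match_scalars <;> field_simp <;> norm_num
  have hw_eq : x - l • y = w := by match_scalars <;> field_simp <;> norm_num
  refine ⟨x, y, hz, fun p hp => ?_⟩
  rw [← norm_cayley_sub_le_iff hl, hz, hw_eq]
  exact hw ⟨p, hp⟩

theorem IsMaximalMonotoneRel.postSet_onePlusSmul_eq_univ [CompleteSpace H]
    (hC : IsMaximalMonotoneRel C) (hl : 0 < l) :
    postSet (onePlusSmul l C) Set.univ = Set.univ := by
  rw [postSet_onePlusSmul_univ_eq_image]
  refine Set.eq_univ_of_forall fun z => ?_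
  obtain ⟨x, y, hz, hxy⟩ := hC.1.exists_add_smul_eq hl z
  exact ⟨(x, y), hC.mem hxy, hz⟩

theorem IsMonotoneRel.isMaximalMonotoneRel_of_postSet_eq_univ (hC : IsMonotoneRel C)
    (hl : 0 < l) (hsurj : postSet (onePlusSmul l C) Set.univ = Set.univ) :
    IsMaximalMonotoneRel C := by
  refine ⟨hC, fun B hB hCB => Set.Subset.antisymm (fun p hp => ?_) hCB⟩
  rw [postSet_onePlusSmul_univ_eq_image] at hsurj
  obtain ⟨q, hq, hqp⟩ := hsurj.ge (Set.mem_univ (p.1 + l • p.2))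
  exact hB.injOn_add_smul hl (hCB hq) hp hqp ▸ hq

end Minty

/-- **Minty's theorem.** For a monotone relation `C` on a complex Hilbert space `H`, the
following are equivalent: (i) `C` is maximal monotone; (ii) `(1 + λC)[H] = H` for some `λ > 0`;
(iii) `(1 + λC)[H] = H` for all `λ > 0`. -/
theorem minty_characterization {Hs : Type*} [NormedAddCommGroup Hs] [InnerProductSpace ℂ Hs]
    [CompleteSpace Hs] (C : Set (Hs × Hs)) (hC : IsMonotoneRel C) :
    (IsMaximalMonotoneRel C ↔ ∃ l : ℝ, 0 < l ∧ postSet (onePlusSmul l C) Set.univ = Set.univ) ∧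
    (IsMaximalMonotoneRel C ↔ ∀ l : ℝ, 0 < l → postSet (onePlusSmul l C) Set.univ = Set.univ) := by
  have surjective (h : IsMaximalMonotoneRel C) (l : ℝ) (hl : 0 < l) :
      postSet (onePlusSmul l C) Set.univ = Set.univ := h.postSet_onePlusSmul_eq_univ hl
  have maximal {l : ℝ} (hl : 0 < l) (h : postSet (onePlusSmul l C) Set.univ = Set.univ) :
      IsMaximalMonotoneRel C := hC.isMaximalMonotoneRel_of_postSet_eq_univ hl h
  exact ⟨⟨fun h => ⟨1, one_pos, surjective h 1 one_pos⟩, fun ⟨_, hl, h⟩ => maximal hl h⟩,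
    ⟨surjective, fun h => maximal one_pos (h 1 one_pos)⟩⟩
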